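/- Let X be a complex Banach space and let T : X → X be a bounded power bounded operator (sup_{n≥0} ‖T^n‖ < ∞). Then for every α ∈ (0,1), the spectrum of T_α = Σ_{k=1}^∞ a_{α,k} T^k satisfies σ(T_α) ⊆ 𝔻 ∪ {1}, where 𝔻 = {z ∈ ℂ : |z| < 1} is the open unit disc. -/

import Mathlib

/-!
The coefficients `a_{α,k}` are positive for `α ∈ (0,1)`, and their partial sums telescope:
`1 - ∑_{k=1}^n a_{α,k} = ∏_{i=1}^n (1 - α/i) ≥ 0`, so `∑ a_{α,k} ≤ 1`.

The operator `T_α` lies in the closed unital subalgebra generated by `T`, a commutative Banach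
algebra, and passing to a subalgebra can only enlarge the spectrum. By Gelfand theory, a spectral
value `z` of `T_α` there is `φ(T_α)` for some character `φ`; with `w = φ(T)` this reads
`z = ∑ a_{α,k} w^k`, and `|w| ≤ 1` since the powers `w^n = φ(T^n)` are bounded.

If `w ≠ 1` then `|a_{α,1} w + a_{α,2} w²| < a_{α,1} + a_{α,2}`, whence `|z| < 1`; if `w = 1` then
`z = ∑ a_{α,k} ∈ (0,1]`. Only the inequality `∑ a_{α,k} ≤ 1` is needed.
-/

open scoped BigOperators

/-- The coefficient `a_{α,k} = (-1)^(k-1) · α(α-1)⋯(α-k+1)/k!`. -/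
noncomputable def aCoef (α : ℝ) (k : ℕ) : ℝ :=
  (-1 : ℝ) ^ (k - 1) * (∏ i ∈ Finset.range k, (α - i)) / (Nat.factorial k)

/-- The `fractional power` `T_α = Σ_{k=1}^∞ a_{α,k} T^k` of a power bounded operator. -/
noncomputable def fracPow {X : Type*} [NormedAddCommGroup X] [NormedSpace ℂ X]
    (α : ℝ) (T : X →L[ℂ] X) : X →L[ℂ] X :=
  ∑' k : ℕ, (aCoef α (k + 1) : ℂ) • T ^ (k + 1)

/-- Closed form `a_{α,n+1} = α/(n+1) · ∏_{i=1}^n (1 - α/i)`, in which the sign has cancelled. -/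
lemma aCoef_succ (α : ℝ) (n : ℕ) :
    aCoef α (n + 1) = α / (n + 1) * ∏ i ∈ Finset.range n, (1 - α / (i + 1)) := by
  unfold aCoef
  induction n with
  | zero => simp
  | succ n ih =>
    rw [Finset.prod_range_succ (fun i : ℕ => 1 - α / ((i : ℝ) + 1))]
    have h1 : ((n : ℝ) + 1) ≠ 0 := by positivity
    have h2 : ((n : ℝ) + 1 + 1) ≠ 0 := by positivity
    have h3 : ((n + 1).factorial : ℝ) ≠ 0 := by positivity
    have ih' : α * ∏ i ∈ Finset.range n, (1 - α / ((i : ℝ) + 1))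
        = ((n : ℝ) + 1) * ((-1 : ℝ) ^ n * (∏ i ∈ Finset.range (n + 1), (α - i))
          / ((n + 1).factorial : ℝ)) := by
      rw [Nat.add_sub_cancel] at ih
      rw [ih]
      field_simp
    calc (-1 : ℝ) ^ (n + 1 + 1 - 1) * (∏ i ∈ Finset.range (n + 1 + 1), (α - i))
          / ((n + 1 + 1).factorial : ℝ)
        = (1 - α / ((n : ℝ) + 1)) / ((n : ℝ) + 1 + 1) * (((n : ℝ) + 1) *
          ((-1 : ℝ) ^ n * (∏ i ∈ Finset.range (n + 1), (α - i)) / ((n + 1).factorial : ℝ))) := by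
          rw [Finset.prod_range_succ _ (n + 1), Nat.factorial_succ (n + 1), Nat.add_sub_cancel]
          push_cast
          field_simp
          ring
      _ = _ := by
          rw [← ih']
          push_cast
          ring

lemma prod_one_sub_div_pos {α : ℝ} (h1 : α < 1) (n : ℕ) :
    0 < ∏ i ∈ Finset.range n, (1 - α / ((i : ℝ) + 1)) := by
  refine Finset.prod_pos fun i _ => ?_
  have h : (0 : ℝ) < (i : ℝ) + 1 := by positivity
  rw [sub_pos, div_lt_one h]
  have : (0 : ℝ) ≤ i := by positivity
  linarith

lemma aCoef_succ_pos {α : ℝ} (h0 : 0 < α) (h1 : α < 1) (n : ℕ) : 0 < aCoef α (n + 1) := by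
  rw [aCoef_succ]
  have := prod_one_sub_div_pos h1 n
  positivity

lemma sum_aCoef_succ (α : ℝ) (n : ℕ) :
    ∑ k ∈ Finset.range n, aCoef α (k + 1)
      = 1 - ∏ i ∈ Finset.range n, (1 - α / ((i : ℝ) + 1)) := by
  induction n with
  | zero => simp
  | succ n ih =>
    rw [Finset.sum_range_succ, ih, aCoef_succ, Finset.prod_range_succ]
    ring

lemma sum_aCoef_succ_le {α : ℝ} (h1 : α < 1) (n : ℕ) :
    ∑ k ∈ Finset.range n, aCoef α (k + 1) ≤ 1 := by
  rw [sum_aCoef_succ]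
  linarith [prod_one_sub_div_pos h1 n]

lemma summable_aCoef_succ {α : ℝ} (h0 : 0 < α) (h1 : α < 1) :
    Summable fun k : ℕ => aCoef α (k + 1) :=
  summable_of_sum_range_le (fun n => (aCoef_succ_pos h0 h1 n).le) (sum_aCoef_succ_le h1)

lemma tsum_aCoef_succ_le {α : ℝ} (h0 : 0 < α) (h1 : α < 1) :
    ∑' k : ℕ, aCoef α (k + 1) ≤ 1 :=
  Real.tsum_le_of_sum_range_le (fun n => (aCoef_succ_pos h0 h1 n).le) (sum_aCoef_succ_le h1)

/-- Strict triangle inequality: the first two terms of `∑ a_k w^k` are aligned only at `w = 1`. -/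
lemma norm_two_terms_lt {a b : ℝ} (ha : 0 < a) (hb : 0 < b) {w : ℂ} (hw : ‖w‖ ≤ 1)
    (hw1 : w ≠ 1) : ‖(a : ℂ) * w ^ 1 + (b : ℂ) * w ^ 2‖ < a + b := by
  have hsq : w.re ^ 2 + w.im ^ 2 ≤ 1 := by
    have h : ‖w‖ ^ 2 ≤ 1 := pow_le_one₀ (norm_nonneg _) hw
    rw [Complex.sq_norm, Complex.normSq_apply] at h
    nlinarith
  have hre : w.re < 1 := by
    refine lt_of_le_of_ne (by nlinarith [sq_nonneg w.im]) fun h => hw1 ?_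
    have him : w.im = 0 := by
      rw [h] at hsq
      exact pow_eq_zero_iff (two_ne_zero) |>.mp (le_antisymm (by linarith) (sq_nonneg _))
    exact Complex.ext (by simpa using h) (by simpa using him)
  have key : ‖(a : ℂ) + (b : ℂ) * w‖ < a + b := by
    refine lt_of_pow_lt_pow_left₀ 2 (by positivity) ?_
    rw [Complex.sq_norm, Complex.normSq_apply]
    simp only [Complex.add_re, Complex.add_im, Complex.mul_re, Complex.mul_im, Complex.ofReal_re,
      Complex.ofReal_im]
    nlinarith [mul_pos ha hb, mul_pos (mul_pos ha hb) (sub_pos.2 hre),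
      mul_le_mul_of_nonneg_left hsq (sq_nonneg b)]
  calc ‖(a : ℂ) * w ^ 1 + (b : ℂ) * w ^ 2‖ = ‖w‖ * ‖(a : ℂ) + (b : ℂ) * w‖ := by
        rw [← norm_mul]; congr 1; ring
    _ ≤ 1 * ‖(a : ℂ) + (b : ℂ) * w‖ := by gcongr
    _ < a + b := by rwa [one_mul]

/-- The scalar function `w ↦ ∑ a_{α,k} w^k` maps the closed unit disc into `𝔻 ∪ {1}`. -/
lemma tsum_aCoef_mem {α : ℝ} (h0 : 0 < α) (h1 : α < 1) {w : ℂ} (hw : ‖w‖ ≤ 1) :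
    ∑' k : ℕ, (aCoef α (k + 1) : ℂ) * w ^ (k + 1) ∈ Metric.ball (0 : ℂ) 1 ∪ {1} := by
  have hs := summable_aCoef_succ h0 h1
  have hle := tsum_aCoef_succ_le h0 h1
  have hbound : ∀ k : ℕ, ‖(aCoef α (k + 1) : ℂ) * w ^ (k + 1)‖ ≤ aCoef α (k + 1) := by
    intro k
    rw [norm_mul, norm_pow, Complex.norm_real, Real.norm_of_nonneg (aCoef_succ_pos h0 h1 k).le]
    exact mul_le_of_le_one_right (aCoef_succ_pos h0 h1 k).le (pow_le_one₀ (norm_nonneg _) hw)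
  by_cases hw1 : w = 1
  · subst hw1
    have hpos : 0 < ∑' k : ℕ, aCoef α (k + 1) :=
      hs.tsum_pos (fun k => (aCoef_succ_pos h0 h1 k).le) 0 (aCoef_succ_pos h0 h1 0)
    simp only [one_pow, mul_one]
    rw [← Complex.ofReal_tsum]
    rcases hle.lt_or_eq with h | h
    · left
      rw [mem_ball_zero_iff, Complex.norm_real, Real.norm_of_nonneg hpos.le]
      exact h
    · right
      simp [h]
  · left
    have hsc : Summable fun k : ℕ => (aCoef α (k + 1) : ℂ) * w ^ (k + 1) :=
      Summable.of_norm_bounded hs hbound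
    have hs2 : Summable fun k : ℕ => aCoef α (k + 2 + 1) := (summable_nat_add_iff 2).2 hs
    rw [mem_ball_zero_iff, ← hsc.sum_add_tsum_nat_add 2]
    rw [← hs.sum_add_tsum_nat_add 2] at hle
    have htail : ‖∑' k : ℕ, (aCoef α (k + 2 + 1) : ℂ) * w ^ (k + 2 + 1)‖
        ≤ ∑' k : ℕ, aCoef α (k + 2 + 1) :=
      tsum_of_norm_bounded hs2.hasSum fun k => hbound (k + 2)
    have hhead := norm_two_terms_lt (aCoef_succ_pos h0 h1 0) (aCoef_succ_pos h0 h1 1) hw hw1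
    simp only [Finset.sum_range_succ, Finset.sum_range_zero, zero_add] at hle hhead ⊢
    exact (norm_add_le _ _).trans_lt (by linarith)

lemma summable_aCoef_smul_pow {A : Type*} [NormedRing A] [NormedAlgebra ℂ A] [CompleteSpace A]
    {α : ℝ} (h0 : 0 < α) (h1 : α < 1) {t : A} {C : ℝ} (hC : ∀ n : ℕ, ‖t ^ n‖ ≤ C) :
    Summable fun k : ℕ => (aCoef α (k + 1) : ℂ) • t ^ (k + 1) := by
  refine Summable.of_norm_bounded ((summable_aCoef_succ h0 h1).mul_right C) fun k => ?_
  rw [norm_smul, Complex.norm_real, Real.norm_of_nonneg (aCoef_succ_pos h0 h1 k).le]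
  exact mul_le_mul_of_nonneg_left (hC _) (aCoef_succ_pos h0 h1 k).le

lemma norm_le_one_of_pow_bounded {w : ℂ} {C : ℝ} (h : ∀ n : ℕ, ‖w‖ ^ n ≤ C) : ‖w‖ ≤ 1 := by
  by_contra! hlt
  obtain ⟨n, hn⟩ := pow_unbounded_of_one_lt C hlt
  exact absurd (h n) (not_le.2 hn)

/-- The commutative case, where every spectral value is the value of a character. -/
lemma spectrum_subset_of_comm {A : Type*} [NormedCommRing A] [NormedAlgebra ℂ A] [CompleteSpace A]
    {α : ℝ} (h0 : 0 < α) (h1 : α < 1) {t : A} {C : ℝ} (hC : ∀ n : ℕ, ‖t ^ n‖ ≤ C) :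
    spectrum ℂ (∑' k : ℕ, (aCoef α (k + 1) : ℂ) • t ^ (k + 1))
      ⊆ Metric.ball (0 : ℂ) 1 ∪ {1} := by
  intro z hz
  obtain ⟨φ, rfl⟩ := WeakDual.CharacterSpace.mem_spectrum_iff_exists.1 hz
  have hw : ‖φ t‖ ≤ 1 := by
    refine norm_le_one_of_pow_bounded (C := C * ‖(1 : A)‖) fun n => ?_
    rw [← norm_pow, ← map_pow]
    exact (spectrum.norm_le_norm_mul_of_mem (AlgHom.apply_mem_spectrum φ _)).trans
      (mul_le_mul_of_nonneg_right (hC n) (norm_nonneg _))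
  have hφ : φ (∑' k : ℕ, (aCoef α (k + 1) : ℂ) • t ^ (k + 1))
      = ∑' k : ℕ, (aCoef α (k + 1) : ℂ) * (φ t) ^ (k + 1) := by
    rw [(summable_aCoef_smul_pow h0 h1 hC).map_tsum φ (map_continuous φ)]
    exact tsum_congr fun k => by rw [map_smul, map_pow, smul_eq_mul]
  rw [hφ]
  exact tsum_aCoef_mem h0 h1 hw

/-- Reduction to the commutative case through the closed subalgebra generated by `t`. -/
lemma spectrum_subset_of_pow_bounded {A : Type*} [NormedRing A] [NormedAlgebra ℂ A]
    [CompleteSpace A] {α : ℝ} (h0 : 0 < α) (h1 : α < 1) {t : A} {C : ℝ}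
    (hC : ∀ n : ℕ, ‖t ^ n‖ ≤ C) :
    spectrum ℂ (∑' k : ℕ, (aCoef α (k + 1) : ℂ) • t ^ (k + 1))
      ⊆ Metric.ball (0 : ℂ) 1 ∪ {1} := by
  let B := Algebra.elemental ℂ t
  let _ : NormedCommRing B := { (inferInstance : NormedRing B) with mul_comm := mul_comm }
  let s : B := ⟨t, Algebra.elemental.self_mem ℂ t⟩
  have hs : ∀ n : ℕ, ‖s ^ n‖ ≤ C := hC
  have hcoe : ((∑' k : ℕ, (aCoef α (k + 1) : ℂ) • s ^ (k + 1) : B) : A)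
      = ∑' k : ℕ, (aCoef α (k + 1) : ℂ) • t ^ (k + 1) :=
    (summable_aCoef_smul_pow h0 h1 hs).map_tsum B.val continuous_subtype_val
  rw [← hcoe]
  exact (spectrum.subset_subalgebra _).trans (spectrum_subset_of_comm h0 h1 hs)

/-- If `T` is power bounded on a complex Banach space and `α ∈ (0,1)`, then the spectrum
of `T_α = Σ_{k≥1} a_{α,k} T^k` is contained in `𝔻 ∪ {1}`. -/
theorem stmt_5 {X : Type*} [NormedAddCommGroup X] [NormedSpace ℂ X] [CompleteSpace X]
    (T : X →L[ℂ] X) (hT : ∃ C : ℝ, ∀ n : ℕ, ‖T ^ n‖ ≤ C)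
    (α : ℝ) (hα : α ∈ Set.Ioo (0 : ℝ) 1) :
    spectrum ℂ (fracPow α T) ⊆ Metric.ball (0 : ℂ) 1 ∪ {1} := by
  obtain ⟨C, hC⟩ := hT
  exact spectrum_subset_of_pow_bounded hα.1 hα.2 hC
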